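/- arXiv:1001.1959 — 4 statements merged into one kernel-verified Lean document; each statement's English description precedes it below -/
import Mathlib

section
/- Let θ = {a = t_0 < t_1 < ⋯ < t_m = b} be a partition of [a,b] ⊆ [0,∞), let (P_t)_{t≥0} be an increasing family of orthogonal projections on H, and let f : [0,∞) → B(H) be hermitian and adapted-commuting with respect to (P_t). Let θ' = θ ∪ {t'} with t_j < t' < t_{j+1} be a one-point refinement of θ. Then σ_{θ'} − σ_θ = (P_{t_{j+1}} − P_{t'}) (f(t') − f(t_j)) (P_{t_{j+1}} − P_{t'}); in particular, if f is increasing then σ_{θ'} − σ_θ is a positive operator. -/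
/-- `sigmaSum f P θ` is the operator sum σ_θ = Σ_{k=1}^m f(t_{k−1})(P_{t_k} − P_{t_{k−1}})
where t₀ < t₁ < ⋯ < tₘ is the increasing enumeration of the finite set θ. -/
noncomputable def sigmaSum {H : Type*} [NormedAddCommGroup H] [InnerProductSpace ℂ H]
    (f P : ℝ → H →L[ℂ] H) (θ : Finset ℝ) : H →L[ℂ] H :=
  (((θ.sort (· ≤ ·)).zip (θ.sort (· ≤ ·)).tail).map
    (fun p => f p.1 ∘L (P p.2 - P p.1))).sum

/-- `IsPartitionOf a b θ`: θ is a partition a = t₀ < t₁ < ⋯ < tₘ = b of [a,b]. -/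
def IsPartitionOf (a b : ℝ) (θ : Finset ℝ) : Prop :=
  a ∈ θ ∧ b ∈ θ ∧ ∀ x ∈ θ, x ∈ Set.Icc a b

/-!
Only the term of `σ_θ` belonging to `[t_j, t_{j+1}]` is affected by the refinement, so for arbitrary
operator-valued `f` and `P` the difference collapses to `(f(t') - f(t_j))(P_{t_{j+1}} - P_{t'})`.
The increment `P_{t_{j+1}} - P_{t'}` is idempotent because `P` is increasing, and it commutes with
`f(t') - f(t_j)` because `f` is adapted, so it may also be written on the left. The result is a
compression of `f(t') - f(t_j)`, and compressions preserve positivity.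
-/

/-- The sum of `g` over the pairs of consecutive entries of a list. It carries the list-level
arithmetic of `sigmaSum`, which is its value on the increasing enumeration of a finite set. -/
def consecutiveSum {α M : Type*} [AddCommMonoid M] (g : α × α → M) (l : List α) : M :=
  (l.consecutivePairs.map g).sum

section Lists

variable {α M : Type*} [AddCommMonoid M] (g : α × α → M)

theorem consecutiveSum_cons_cons (x y : α) (l : List α) :
    consecutiveSum g (x :: y :: l) = g (x, y) + consecutiveSum g (y :: l) := by
  simp [consecutiveSum, List.consecutivePairs]

theorem consecutiveSum_append_cons (l₁ : List α) (x : α) (l₂ : List α) :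
    consecutiveSum g (l₁ ++ x :: l₂) =
      consecutiveSum g (l₁ ++ [x]) + consecutiveSum g (x :: l₂) := by
  induction l₁ with
  | nil => simp [consecutiveSum, List.consecutivePairs]
  | cons y l₁ ih =>
    cases l₁ with
    | nil => simp [consecutiveSum, List.consecutivePairs]
    | cons z l₁ =>
      simp only [List.cons_append, consecutiveSum_cons_cons] at ih ⊢
      rw [ih, add_assoc]

end Lists

section SortedLists

variable {α : Type*} [LinearOrder α] {s : Finset α} {x y z : α}

theorem sort_eq_append_cons (hx : x ∈ s) :
    s.sort (· ≤ ·) =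
      {w ∈ s | w < x}.sort (· ≤ ·) ++ x :: {w ∈ s | x < w}.sort (· ≤ ·) := by
  have sorted : ({w ∈ s | w < x}.sort (· ≤ ·) ++ x :: {w ∈ s | x < w}.sort (· ≤ ·)).Pairwise
      (· < ·) := by
    have hl := (Finset.sortedLT_sort {w ∈ s | w < x}).pairwise
    have hr := (Finset.sortedLT_sort {w ∈ s | x < w}).pairwise
    simp only [List.pairwise_append, List.pairwise_cons, List.mem_cons, Finset.mem_sort,
      Finset.mem_filter]
    grind
  rw [← (List.toFinset_sort (· ≤ ·) sorted.nodup).2 (sorted.imp le_of_lt)]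
  congr 1
  ext w
  simp only [List.mem_toFinset, List.mem_append, List.mem_cons, Finset.mem_sort,
    Finset.mem_filter]
  grind

theorem sort_filter_le_eq_append_singleton (hx : x ∈ s) :
    {w ∈ s | w ≤ x}.sort (· ≤ ·) = {w ∈ s | w < x}.sort (· ≤ ·) ++ [x] := by
  have mem : x ∈ {w ∈ s | w ≤ x} := Finset.mem_filter.2 ⟨hx, le_rfl⟩
  have lower : {w ∈ {w ∈ s | w ≤ x} | w < x} = {w ∈ s | w < x} := by grind
  have upper : {w ∈ {w ∈ s | w ≤ x} | x < w} = ∅ := by grind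
  rw [sort_eq_append_cons mem, lower, upper, Finset.sort_empty]

theorem sort_filter_ge_eq_cons (hx : x ∈ s) :
    {w ∈ s | x ≤ w}.sort (· ≤ ·) = x :: {w ∈ s | x < w}.sort (· ≤ ·) := by
  rw [← Finset.sort_insert (· ≤ ·) (by grind) (by simp)]
  congr 1
  grind

theorem filter_ge_eq_insert_of_gap (hx : x ∈ s) (hxz : x < z)
    (gap : ∀ w ∈ s, w ≤ x ∨ z ≤ w) :
    {w ∈ s | x ≤ w} = insert x {w ∈ s | z ≤ w} := by
  grind

theorem filter_insert_ge_eq_insert_of_gap (hx : x ∈ s) (hxy : x < y) (hyz : y < z)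
    (gap : ∀ w ∈ s, w ≤ x ∨ z ≤ w) :
    {w ∈ insert y s | x ≤ w} = insert x (insert y {w ∈ s | z ≤ w}) := by
  grind

end SortedLists

theorem mul_mul_eq_mul_of_commute_of_isIdempotentElem {S : Type*} [Semigroup S]
    {d a : S} (hd : IsIdempotentElem d) (h : Commute d a) : d * (a * d) = a * d := by
  rw [← mul_assoc, h.eq, mul_assoc, hd.eq]

theorem isPositive_conj_of_isSymmetric {𝕜 E : Type*} [RCLike 𝕜] [NormedAddCommGroup E]
    [InnerProductSpace 𝕜 E] {D T : E →L[𝕜] E} (hD : D.IsSymmetric) (hT : T.IsPositive) :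
    (D ∘L T ∘L D).IsPositive := by
  refine ⟨fun x y => ?_, fun x => ?_⟩
  · exact (hD _ _).trans ((hT.isSymmetric _ _).trans (hD _ _))
  · exact (hT.re_inner_nonneg_left (D x)).trans_eq (congrArg RCLike.re (hD _ x).symm)

section SigmaSum

variable {H : Type*} [NormedAddCommGroup H] [InnerProductSpace ℂ H] (f P : ℝ → H →L[ℂ] H)
  {θ : Finset ℝ} {x y z : ℝ}

theorem sigmaSum_eq_consecutiveSum (θ : Finset ℝ) :
    sigmaSum f P θ = consecutiveSum (fun p => f p.1 ∘L (P p.2 - P p.1)) (θ.sort (· ≤ ·)) :=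
  rfl

theorem sigmaSum_eq_add_of_mem (hx : x ∈ θ) :
    sigmaSum f P θ = sigmaSum f P {w ∈ θ | w ≤ x} + sigmaSum f P {w ∈ θ | x ≤ w} := by
  simp only [sigmaSum_eq_consecutiveSum]
  rw [sort_eq_append_cons hx, consecutiveSum_append_cons, sort_filter_le_eq_append_singleton hx,
    sort_filter_ge_eq_cons hx]

theorem sigmaSum_insert_of_lt_isLeast (hz : IsLeast (θ : Set ℝ) z) (hxz : x < z) :
    sigmaSum f P (insert x θ) = f x ∘L (P z - P x) + sigmaSum f P θ := by
  have sort_θ : θ.sort (· ≤ ·) = z :: {w ∈ θ | z < w}.sort (· ≤ ·) := by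
    rw [← sort_filter_ge_eq_cons hz.1, Finset.filter_true_of_mem hz.2]
  have sort_insert : (insert x θ).sort (· ≤ ·) = x :: θ.sort (· ≤ ·) :=
    Finset.sort_insert (· ≤ ·) (fun w hw => (hxz.trans_le (hz.2 hw)).le)
      fun hx => (hz.2 hx).not_gt hxz
  simp only [sigmaSum_eq_consecutiveSum]
  rw [sort_insert, sort_θ, consecutiveSum_cons_cons]

theorem sigmaSum_insert_sub (hx : x ∈ θ) (hz : z ∈ θ) (hxy : x < y) (hyz : y < z)
    (gap : ∀ w ∈ θ, w ≤ x ∨ z ≤ w) :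
    sigmaSum f P (insert y θ) - sigmaSum f P θ = (f y - f x) ∘L (P z - P y) := by
  have least_z : IsLeast ({w ∈ θ | z ≤ w} : Finset ℝ) z := by simp [IsLeast, lowerBounds, hz]
  have least_y : IsLeast (insert y {w ∈ θ | z ≤ w} : Finset ℝ) y := by
    simpa [min_eq_left hyz.le] using least_z.insert y
  have coarse : sigmaSum f P θ = sigmaSum f P {w ∈ θ | w ≤ x} +
      (f x ∘L (P z - P x) + sigmaSum f P {w ∈ θ | z ≤ w}) := by
    rw [sigmaSum_eq_add_of_mem f P hx, filter_ge_eq_insert_of_gap hx (hxy.trans hyz) gap,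
      sigmaSum_insert_of_lt_isLeast f P least_z (hxy.trans hyz)]
  have fine : sigmaSum f P (insert y θ) = sigmaSum f P {w ∈ θ | w ≤ x} +
      (f x ∘L (P y - P x) + (f y ∘L (P z - P y) + sigmaSum f P {w ∈ θ | z ≤ w})) := by
    rw [sigmaSum_eq_add_of_mem f P (Finset.mem_insert_of_mem hx),
      Finset.filter_insert, if_neg hxy.not_ge, filter_insert_ge_eq_insert_of_gap hx hxy hyz gap,
      sigmaSum_insert_of_lt_isLeast f P least_y hxy, sigmaSum_insert_of_lt_isLeast f P least_z hyz]
  rw [fine, coarse]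
  simp only [ContinuousLinearMap.comp_sub, ContinuousLinearMap.sub_comp]
  abel

end SigmaSum

theorem sigma_one_point_refinement_general
    {H : Type*} [NormedAddCommGroup H] [InnerProductSpace ℂ H]
    (P : ℝ → H →L[ℂ] H)
    (hP_symm : ∀ s, 0 ≤ s → (P s).IsSymmetric)
    (hP_mono : ∀ s u, 0 ≤ s → s ≤ u → P s ∘L P u = P s ∧ P u ∘L P s = P s)
    (f : ℝ → H →L[ℂ] H)
    (hf_adapted : ∀ s u, 0 ≤ s → s ≤ u → f s ∘L P u = P u ∘L f s)
    (θ : Finset ℝ) (t' tj tnext : ℝ) (htj_nonneg : 0 ≤ tj) (htj : tj ∈ θ) (htnext : tnext ∈ θ)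
    (htj_lt : tj < t') (hlt_tnext : t' < tnext) (gap : ∀ s ∈ θ, s ≤ tj ∨ tnext ≤ s) :
    sigmaSum f P (insert t' θ) - sigmaSum f P θ =
      (P tnext - P t') ∘L (f t' - f tj) ∘L (P tnext - P t') ∧
    ((f t' - f tj).IsPositive →
      (sigmaSum f P (insert t' θ) - sigmaSum f P θ).IsPositive) := by
  have ht' : 0 ≤ t' := htj_nonneg.trans htj_lt.le
  have htnext' : 0 ≤ tnext := ht'.trans hlt_tnext.le
  have idem : IsIdempotentElem (P tnext - P t') :=
    IsIdempotentElem.sub (hP_mono _ _ ht' le_rfl).1 (hP_mono _ _ htnext' le_rfl).1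
      (hP_mono _ _ ht' hlt_tnext.le).1 (hP_mono _ _ ht' hlt_tnext.le).2
  have comm {s : ℝ} (hs : 0 ≤ s) (hst : s ≤ t') : Commute (P tnext - P t') (f s) :=
    Commute.sub_left (hf_adapted s tnext hs (hst.trans hlt_tnext.le)).symm
      (hf_adapted s t' hs hst).symm
  have eq_conj : sigmaSum f P (insert t' θ) - sigmaSum f P θ =
      (P tnext - P t') ∘L (f t' - f tj) ∘L (P tnext - P t') :=
    (sigmaSum_insert_sub f P htj htnext htj_lt hlt_tnext gap).trans
      (mul_mul_eq_mul_of_commute_of_isIdempotentElem idem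
        ((comm ht' le_rfl).sub_right (comm htj_nonneg htj_lt.le))).symm
  have symm : (P tnext - P t').IsSymmetric := (hP_symm tnext htnext').sub (hP_symm t' ht')
  exact ⟨eq_conj, fun h => eq_conj ▸ isPositive_conj_of_isSymmetric symm h⟩

/-- For a one-point refinement θ' = θ ∪ {t'} with t_j < t' < t_{j+1}, one has
σ_{θ'} − σ_θ = (P_{t_{j+1}} − P_{t'})(f(t') − f(t_j))(P_{t_{j+1}} − P_{t'}); in particular,
if f is increasing then σ_{θ'} − σ_θ is a positive operator. -/
theorem sigma_one_point_refinement
    {H : Type*} [NormedAddCommGroup H] [InnerProductSpace ℂ H] [CompleteSpace H]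
    (a b : ℝ) (ha : 0 ≤ a) (hab : a < b)
    (P : ℝ → H →L[ℂ] H)
    (hP_proj : ∀ s, 0 ≤ s → IsSelfAdjoint (P s) ∧ P s ∘L P s = P s)
    (hP_mono : ∀ s u, 0 ≤ s → s ≤ u → P s ∘L P u = P s ∧ P u ∘L P s = P s)
    (f : ℝ → H →L[ℂ] H)
    (hf_herm : ∀ s, 0 ≤ s → IsSelfAdjoint (f s))
    (hf_adapted : ∀ s u, 0 ≤ s → s ≤ u → f s ∘L P u = P u ∘L f s)
    (θ : Finset ℝ) (hθ : IsPartitionOf a b θ)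
    (t' : ℝ) (ht' : t' ∈ Set.Ioo a b) (ht'θ : t' ∉ θ)
    (tj tnext : ℝ) (htj : tj ∈ θ) (htnext : tnext ∈ θ)
    (htj_lt : tj < t') (hlt_tnext : t' < tnext)
    (htj_max : ∀ s ∈ θ, s < t' → s ≤ tj)
    (htnext_min : ∀ s ∈ θ, t' < s → tnext ≤ s) :
    sigmaSum f P (insert t' θ) - sigmaSum f P θ =
      (P tnext - P t') ∘L (f t' - f tj) ∘L (P tnext - P t') ∧
    ((∀ u v, 0 ≤ u → u ≤ v → (f v - f u).IsPositive) →
      (sigmaSum f P (insert t' θ) - sigmaSum f P θ).IsPositive) := by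
  have hj : 0 ≤ tj := ha.trans (hθ.2.2 tj htj).1
  have general := sigma_one_point_refinement_general P
    (fun s hs => (hP_proj s hs).1.isSymmetric) hP_mono f hf_adapted θ t' tj tnext hj htj htnext
    htj_lt hlt_tnext fun s hs =>
      (ne_of_mem_of_not_mem hs ht'θ).lt_or_gt.imp (htj_max s hs) (htnext_min s hs)
  exact ⟨general.1, fun hf => general.2 (hf tj t' hj htj_lt.le)⟩
end

section
/- Let θ = {a = t_0 < t_1 < ⋯ < t_m = b} be a partition of [a,b] ⊆ [0,∞), let (P_t)_{t≥0} be an increasing family of orthogonal projections on H, and let f : [0,∞) → B(H) be hermitian and adapted-commuting with respect to (P_t). Then ‖σ_θ‖ ≤ max_{1≤k≤m} ‖f(t_{k−1})‖. -/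
/-!
The terms `x k = f (t (k - 1)) * (P (t k) - P (t (k - 1)))` of the Riemann sum are pairwise
orthogonal, in the sense that `star (x i) * x j = 0 = x i * star (x j)` for `i ≠ j`: the increments
of `P` are mutually orthogonal projections, and each commutes with its coefficient. By the
C⋆-identity the norm of such a sum is the largest norm of its terms, and an increment, being a
projection, has norm at most one.
-/

/-- An increasing family of orthogonal projections in a star ring. The order `p i ≤ p j` of
projections is encoded as `p i * p j = p i`, so that no order on the ring is needed; for `i = j`
this says that `p i` is idempotent. -/
structure IsIncreasingProjectionFamily {ι R : Type*} [Preorder ι] [Mul R] [Star R]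
    (p : ι → R) : Prop where
  isSelfAdjoint (i : ι) : IsSelfAdjoint (p i)
  mul_eq_left ⦃i j : ι⦄ (hij : i ≤ j) : p i * p j = p i

namespace IsIncreasingProjectionFamily

variable {ι R : Type*} [Preorder ι] [NonUnitalNonAssocRing R] [StarRing R] {p : ι → R}

theorem isStarProjection_sub (hp : IsIncreasingProjectionFamily p) {i j : ι} (hij : i ≤ j) :
    IsStarProjection (p j - p i) :=
  have isStarProjection (k : ι) : IsStarProjection (p k) :=
    ⟨hp.mul_eq_left le_rfl, hp.isSelfAdjoint k⟩
  (isStarProjection i).sub_of_mul_eq_left (isStarProjection j) (hp.mul_eq_left hij)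

theorem sub_mul_sub_eq_zero (hp : IsIncreasingProjectionFamily p) {i j k l : ι}
    (hij : i ≤ j) (hjk : j ≤ k) (hkl : k ≤ l) : (p j - p i) * (p l - p k) = 0 := by
  have hik : i ≤ k := hij.trans hjk
  simp only [mul_sub, sub_mul, hp.mul_eq_left hjk, hp.mul_eq_left (hjk.trans hkl),
    hp.mul_eq_left hik, hp.mul_eq_left (hik.trans hkl), sub_self]

theorem pairwise_increment_mul_eq_zero {m : ℕ} {p : Fin (m + 1) → R}
    (hp : IsIncreasingProjectionFamily p) :
    Pairwise fun i j : Fin m => (p i.succ - p i.castSucc) * (p j.succ - p j.castSucc) = 0 := by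
  have mul_eq_zero_of_lt {i j : Fin m} (hij : i < j) :
      (p i.succ - p i.castSucc) * (p j.succ - p j.castSucc) = 0 :=
    hp.sub_mul_sub_eq_zero i.castSucc_le_succ (Fin.succ_le_castSucc_iff.2 hij) j.castSucc_le_succ
  have isSelfAdjoint_increment (i : Fin m) : IsSelfAdjoint (p i.succ - p i.castSucc) :=
    (hp.isSelfAdjoint _).sub (hp.isSelfAdjoint _)
  intro i j hij
  rcases hij.lt_or_gt with hlt | hgt
  · exact mul_eq_zero_of_lt hlt
  · simpa only [star_mul, star_zero, (isSelfAdjoint_increment _).star_eq]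
      using congrArg star (mul_eq_zero_of_lt hgt)

end IsIncreasingProjectionFamily

section CStarAlgebra

variable {ι A : Type*} [NonUnitalCStarAlgebra A] {s : Finset ι}

theorem nnnorm_sum_eq_sup_of_orthogonal {x : ι → A}
    (hleft : Pairwise fun i j => star (x i) * x j = 0)
    (hright : Pairwise fun i j => x i * star (x j) = 0) :
    ‖∑ i ∈ s, x i‖₊ = s.sup (‖x ·‖₊) := by
  have star_sum_mul_sum : star (∑ i ∈ s, x i) * ∑ i ∈ s, x i = ∑ i ∈ s, star (x i) * x i := by
    rw [star_sum, Finset.sum_mul_sum]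
    refine Finset.sum_congr rfl fun i hi => ?_
    exact Finset.sum_eq_single_of_mem i hi fun j _ hji => hleft hji.symm
  have squares_orthogonal : Pairwise fun i j => star (x i) * x i * (star (x j) * x j) = 0 := by
    intro i j hij
    rw [mul_assoc, ← mul_assoc (x i), hright hij, zero_mul, mul_zero]
  have sq_eq : ‖∑ i ∈ s, x i‖₊ ^ 2 = (s.sup (‖x ·‖₊)) ^ 2 := calc
    ‖∑ i ∈ s, x i‖₊ ^ 2 = ‖∑ i ∈ s, star (x i) * x i‖₊ := by
      rw [← star_sum_mul_sum, CStarRing.nnnorm_star_mul_self, sq]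
    _ = s.sup fun i => ‖x i‖₊ ^ 2 := by
      simp only [IsSelfAdjoint.nnnorm_sum_eq_sup s (fun i _ => .star_mul_self (x i))
        squares_orthogonal, CStarRing.nnnorm_star_mul_self, sq]
    _ = (s.sup (‖x ·‖₊)) ^ 2 :=
      (Finset.apply_sup_eq_sup_comp_of_linearOrder (· ^ 2) (pow_left_mono 2) (by simp)).symm
  exact pow_left_injective two_ne_zero sq_eq

theorem norm_sum_mul_le_sup' {p a : ι → A} (hp : ∀ i, IsStarProjection (p i))
    (horth : Pairwise fun i j => p i * p j = 0) (hcomm : ∀ i, Commute (a i) (p i))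
    (hs : s.Nonempty) :
    ‖∑ i ∈ s, a i * p i‖ ≤ s.sup' hs (‖a ·‖) := by
  have star_p (i : ι) : star (p i) = p i := (hp i).isSelfAdjoint.star_eq
  have hleft : Pairwise fun i j => star (a i * p i) * (a j * p j) = 0 := by
    intro i j hij
    rw [(hcomm i).eq, (hcomm j).eq, star_mul, star_p, mul_assoc, ← mul_assoc (p i), horth hij,
      zero_mul, mul_zero]
  have hright : Pairwise fun i j => a i * p i * star (a j * p j) = 0 := by
    intro i j hij
    rw [star_mul, star_p, mul_assoc, ← mul_assoc (p i), horth hij, zero_mul, mul_zero]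
  obtain ⟨i, hi, hsup⟩ := s.exists_mem_eq_sup hs fun i => ‖a i * p i‖₊
  calc ‖∑ i ∈ s, a i * p i‖ = ‖a i * p i‖ := by
        rw [← coe_nnnorm, nnnorm_sum_eq_sup_of_orthogonal hleft hright, hsup, coe_nnnorm]
    _ ≤ ‖a i‖ * ‖p i‖ := norm_mul_le _ _
    _ ≤ ‖a i‖ := mul_le_of_le_one_right (norm_nonneg _) (hp i).norm_le
    _ ≤ s.sup' hs (‖a ·‖) := Finset.le_sup' (‖a ·‖) hi

theorem sigma_norm_le_general {m : ℕ} {p : Fin (m + 1) → A} (hp : IsIncreasingProjectionFamily p)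
    {a : Fin m → A} (hcomm : ∀ k, Commute (a k) (p k.succ - p k.castSucc))
    (hm : (Finset.univ : Finset (Fin m)).Nonempty) :
    ‖∑ k, a k * (p k.succ - p k.castSucc)‖ ≤ Finset.univ.sup' hm (‖a ·‖) :=
  norm_sum_mul_le_sup' (fun k => hp.isStarProjection_sub k.castSucc_le_succ)
    hp.pairwise_increment_mul_eq_zero hcomm hm

end CStarAlgebra

/-- For a partition θ = {a = t₀ < ⋯ < tₘ = b} of [a,b] ⊆ [0,∞), increasing
projections (P_t), and hermitian adapted-commuting f, one has
‖σ_θ‖ ≤ max_{1≤k≤m} ‖f(t_{k−1})‖. -/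
theorem sigma_norm_le
    {H : Type*} [NormedAddCommGroup H] [InnerProductSpace ℂ H] [CompleteSpace H]
    (a b : ℝ) (ha : 0 ≤ a) (hab : a < b)
    (m : ℕ) (hm : 0 < m) (t : Fin (m + 1) → ℝ)
    (ht_mono : StrictMono t) (ht0 : t 0 = a) (htm : t (Fin.last m) = b)
    (P : ℝ → H →L[ℂ] H)
    (hP_proj : ∀ s, 0 ≤ s → IsSelfAdjoint (P s) ∧ P s ∘L P s = P s)
    (hP_mono : ∀ s u, 0 ≤ s → s ≤ u → P s ∘L P u = P s ∧ P u ∘L P s = P s)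
    (f : ℝ → H →L[ℂ] H)
    (hf_herm : ∀ s, 0 ≤ s → IsSelfAdjoint (f s))
    (hf_adapted : ∀ s u, 0 ≤ s → s ≤ u → f s ∘L P u = P u ∘L f s) :
    ‖∑ k : Fin m, f (t k.castSucc) ∘L (P (t k.succ) - P (t k.castSucc))‖ ≤
      (Finset.univ : Finset (Fin m)).sup' ⟨⟨0, hm⟩, Finset.mem_univ _⟩
        (fun k => ‖f (t k.castSucc)‖) := by
  have ht_nonneg (i : Fin (m + 1)) : 0 ≤ t i :=
    (ha.trans_eq ht0.symm).trans (ht_mono.monotone i.zero_le)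
  have hPt : IsIncreasingProjectionFamily (P ∘ t) :=
    ⟨fun i => (hP_proj _ (ht_nonneg i)).1,
      fun i _ hij => (hP_mono _ _ (ht_nonneg i) (ht_mono.monotone hij)).1⟩
  have hcomm (k : Fin m) : Commute (f (t k.castSucc)) (P (t k.succ) - P (t k.castSucc)) :=
    .sub_right (hf_adapted _ _ (ht_nonneg _) (ht_mono.monotone k.castSucc_le_succ))
      (hf_adapted _ _ (ht_nonneg _) le_rfl)
  exact sigma_norm_le_general hPt hcomm _
end

section
/- Let (P_t)_{t≥0} be an increasing family of orthogonal projections on H and let f : [0,∞) → B(H) be hermitian, increasing, and adapted-commuting with respect to (P_t). Fix an interval [a,b] ⊆ [0,∞). Then there exists a bounded self-adjoint operator T on H with ‖T‖ ≤ max{‖f(a)‖, ‖f(b)‖} such that σ_θ ≤ T for every partition θ of [a,b], and for every ξ ∈ H the net (σ_θ ξ), indexed by the partitions of [a,b] directed by refinement, converges in norm to T ξ (i.e. σ_θ → T in the strong operator topology along refinement). -/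
/-!
Refining a partition splits a term `f s (P v - P s)` into `f s (P u - P s) + f s (P v - P u)` and
replaces the second `f s` by the larger `f u`. Both commute with the projection `P v - P u`, so the
sums increase along refinement, and by comparison with the constant integrands `±M`, where
`M = max ‖f a‖ ‖f b‖`, they lie between `±M (P b - P a)`. A bounded increasing net of
operators converges strongly to its supremum: Cauchy–Schwarz for the form `⟪D x, y⟫` of a positive
operator `D` gives `‖D x‖² ≤ ‖D‖ ⟪D x, x⟫`, which reduces the Cauchy property of the net at `x` to
that of the increasing, bounded net of its quadratic forms.
-/

open ContinuousLinearMap Filter Topology RCLike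
open scoped InnerProductSpace

section LeftSum

variable {ι R : Type*} [Ring R]

/-- The left Riemann–Stieltjes sum `∑ f tₖ₋₁ (P tₖ - P tₖ₋₁)` over a list `[t₀, …, tₘ]`.
Points are kept in a list so that refinement can be treated by induction; `sigmaSum f P θ` unfolds
to the sum over `θ.sort`. -/
def leftSum (f P : ι → R) (l : List ι) : R :=
  ((l.zip l.tail).map fun p => f p.1 * (P p.2 - P p.1)).sum

@[simp]
lemma leftSum_singleton (f P : ι → R) (x : ι) : leftSum f P [x] = 0 := by
  simp [leftSum]

@[simp]
lemma leftSum_cons_cons (f P : ι → R) (x y : ι) (l : List ι) :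
    leftSum f P (x :: y :: l) = f x * (P y - P x) + leftSum f P (y :: l) := by
  simp [leftSum]

lemma leftSum_const (c : R) (P : ι → R) (x : ι) (l : List ι) :
    leftSum (fun _ => c) P (x :: l) = c * (P (l.getLastD x) - P x) := by
  induction l generalizing x with
  | nil => simp
  | cons y l ih =>
    rw [leftSum_cons_cons, ih, List.getLastD_cons, ← mul_add, sub_add_sub_cancel']

variable [LinearOrder ι] [PartialOrder R] [IsOrderedAddMonoid R] {s : Set ι} {f g P : ι → R}

lemma leftSum_le_leftSum
    (hfg : ∀ t ∈ s, ∀ u ∈ s, t ≤ u → f t * (P u - P t) ≤ g t * (P u - P t))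
    {l : List ι} (hl : l.Pairwise (· ≤ ·)) (hls : ∀ t ∈ l, t ∈ s) :
    leftSum f P l ≤ leftSum g P l := by
  induction l with
  | nil => exact le_rfl
  | cons x l ih =>
    cases l with
    | nil => simp
    | cons y l =>
      simp only [leftSum_cons_cons]
      exact add_le_add (hfg x (hls x (by simp)) y (hls y (by simp)) (List.rel_of_pairwise_cons hl
        (by simp))) (ih hl.of_cons fun t ht => hls t (by simp [ht]))

lemma leftSum_cons_le_leftSum_cons_of_sublist
    (hf : ∀ t ∈ s, ∀ u ∈ s, ∀ v ∈ s, t ≤ u → u ≤ v → f t * (P v - P u) ≤ f u * (P v - P u))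
    {l₁ l₂ : List ι} (hsub : l₁.Sublist l₂) {x : ι} (hl : (x :: l₂).Pairwise (· < ·))
    (hls : ∀ t ∈ x :: l₂, t ∈ s) (hlast : l₁.getLastD x = l₂.getLastD x) :
    leftSum f P (x :: l₁) ≤ leftSum f P (x :: l₂) := by
  induction hsub generalizing x with
  | slnil => exact le_rfl
  | @cons l₁ l₂ y hsub ih =>
    have hxy : x < y := List.rel_of_pairwise_cons hl (by simp)
    rw [List.getLastD_cons] at hlast
    cases l₁ with
    | nil =>
      have hmem : x ∈ y :: l₂ := by
        rw [show x = l₂.getLastD y from hlast]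
        exact List.getLastD_mem_cons
      exact absurd (List.rel_of_pairwise_cons hl hmem) (lt_irrefl x)
    | cons z l₁ =>
      have hyz : y < z := List.rel_of_pairwise_cons hl.of_cons (hsub.subset (by simp))
      have hz : z ∈ s := hls z (by simp [hsub.subset List.mem_cons_self])
      calc leftSum f P (x :: z :: l₁)
          = f x * (P y - P x) + f x * (P z - P y) + leftSum f P (z :: l₁) := by
            rw [leftSum_cons_cons, ← mul_add, sub_add_sub_cancel']
        _ ≤ f x * (P y - P x) + f y * (P z - P y) + leftSum f P (z :: l₁) := by
            gcongr
            exact hf x (hls x (by simp)) y (hls y (by simp)) z hz hxy.le hyz.le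
        _ = f x * (P y - P x) + leftSum f P (y :: z :: l₁) := by
            rw [leftSum_cons_cons, add_assoc]
        _ ≤ f x * (P y - P x) + leftSum f P (y :: l₂) := by
            gcongr
            exact ih hl.of_cons (fun t ht => hls t (List.mem_cons_of_mem _ ht)) hlast
        _ = leftSum f P (x :: y :: l₂) := (leftSum_cons_cons ..).symm
  | @cons_cons l₁ l₂ y _ ih =>
    simp only [leftSum_cons_cons, List.getLastD_cons] at hlast ⊢
    gcongr
    exact ih hl.of_cons (fun t ht => hls t (List.mem_cons_of_mem _ ht)) hlast

end LeftSum

section Partition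

lemma le_getLastD_of_pairwise {ι : Type*} [Preorder ι] {l : List ι} {x y : ι}
    (hl : (x :: l).Pairwise (· ≤ ·)) (hy : y ∈ x :: l) : y ≤ l.getLastD x := by
  induction l generalizing x with
  | nil => exact (List.mem_singleton.1 hy).le
  | cons z l ih =>
    rw [List.getLastD_cons]
    rcases List.mem_cons.1 hy with rfl | hy
    · exact List.rel_of_pairwise_cons hl List.getLastD_mem_cons
    · exact ih hl.of_cons hy

variable {ι : Type*} [LinearOrder ι] {a b : ι} {θ θ' : Finset ι}

lemma sort_sublist_sort (h : θ ⊆ θ') : θ.sort.Sublist θ'.sort :=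
  List.sublist_of_subperm_of_pairwise
    (List.subperm_of_subset (Finset.sort_nodup ..) fun _ ht =>
      (Finset.mem_sort _).2 (h ((Finset.mem_sort _).1 ht)))
    (Finset.pairwise_sort ..) (Finset.pairwise_sort ..)

/-- `θ` is a partition of `[a, b]`, recorded as its set of points; inclusion is refinement. For real
endpoints this unfolds to `IsPartitionOf`. -/
def IsPartition (a b : ι) (θ : Finset ι) : Prop :=
  a ∈ θ ∧ b ∈ θ ∧ ∀ x ∈ θ, x ∈ Set.Icc a b

lemma isPartition_pair (hab : a ≤ b) : IsPartition a b {a, b} := by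
  simp [IsPartition, hab]

lemma nonempty_isPartition (hab : a ≤ b) : Nonempty {θ : Finset ι // IsPartition a b θ} :=
  ⟨⟨_, isPartition_pair hab⟩⟩

namespace IsPartition

lemma union (hθ : IsPartition a b θ) (hθ' : IsPartition a b θ') : IsPartition a b (θ ∪ θ') :=
  ⟨Finset.mem_union_left _ hθ.1, Finset.mem_union_left _ hθ.2.1, fun x hx =>
    (Finset.mem_union.1 hx).elim (hθ.2.2 x) (hθ'.2.2 x)⟩

instance : SemilatticeSup {θ : Finset ι // IsPartition a b θ} :=
  Subtype.semilatticeSup fun _ _ => union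

lemma sort_eq_cons (hθ : IsPartition a b θ) : θ.sort = a :: (θ.erase a).sort := by
  rw [← Finset.sort_insert, Finset.insert_erase hθ.1]
  · exact fun x hx => (hθ.2.2 x (Finset.mem_of_mem_erase hx)).1
  · exact Finset.notMem_erase a θ

lemma mem_Icc_of_mem_sort (hθ : IsPartition a b θ) : ∀ t ∈ θ.sort, t ∈ Set.Icc a b :=
  fun t ht => hθ.2.2 t ((Finset.mem_sort _).1 ht)

lemma getLastD_sort_erase (hθ : IsPartition a b θ) : (θ.erase a).sort.getLastD a = b := by
  have hlast : (θ.erase a).sort.getLastD a ∈ θ.sort := by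
    rw [hθ.sort_eq_cons]
    exact List.getLastD_mem_cons
  refine le_antisymm (hθ.mem_Icc_of_mem_sort _ hlast).2 (le_getLastD_of_pairwise ?_ ?_)
  · rw [← hθ.sort_eq_cons]
    exact Finset.pairwise_sort ..
  · rw [← hθ.sort_eq_cons]
    exact (Finset.mem_sort _).2 hθ.2.1

variable {R : Type*} [Ring R] {f P : ι → R}

lemma leftSum_sort_const (hθ : IsPartition a b θ) (c : R) (P : ι → R) :
    leftSum (fun _ => c) P θ.sort = c * (P b - P a) := by
  rw [hθ.sort_eq_cons, leftSum_const, hθ.getLastD_sort_erase]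

lemma leftSum_sort_le_of_subset [PartialOrder R] [IsOrderedAddMonoid R]
    (hf : ∀ t ∈ Set.Icc a b, ∀ u ∈ Set.Icc a b, ∀ v ∈ Set.Icc a b, t ≤ u → u ≤ v →
      f t * (P v - P u) ≤ f u * (P v - P u))
    (hθ : IsPartition a b θ) (hθ' : IsPartition a b θ') (hsub : θ ⊆ θ') :
    leftSum f P θ.sort ≤ leftSum f P θ'.sort := by
  have hmem := hθ'.mem_Icc_of_mem_sort
  have hlt : θ'.sort.Pairwise (· < ·) := (Finset.sortedLT_sort θ').pairwise
  rw [hθ'.sort_eq_cons] at hmem hlt ⊢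
  rw [hθ.sort_eq_cons]
  exact leftSum_cons_le_leftSum_cons_of_sublist hf
    (sort_sublist_sort (Finset.erase_subset_erase a hsub)) hlt hmem
    (hθ.getLastD_sort_erase.trans hθ'.getLastD_sort_erase.symm)

end IsPartition

end Partition

section Operator

variable {𝕜 H : Type*} [RCLike 𝕜] [NormedAddCommGroup H] [InnerProductSpace 𝕜 H]
  {A B C : H →L[𝕜] H}

instance : IsOrderedAddMonoid (H →L[𝕜] H) where
  add_le_add_left A B hAB C := by rwa [ContinuousLinearMap.le_def, add_sub_add_right_eq_sub]

lemma reApplyInnerSelf_mono (hAB : A ≤ B) (x : H) :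
    A.reApplyInnerSelf x ≤ B.reApplyInnerSelf x := by
  have h : 0 ≤ re ⟪(B - A) x, x⟫_𝕜 := hAB.re_inner_nonneg_left x
  simpa [reApplyInnerSelf_apply, inner_sub_left] using h

lemma abs_reApplyInnerSelf_le (A : H →L[𝕜] H) (x : H) :
    |A.reApplyInnerSelf x| ≤ ‖A‖ * ‖x‖ ^ 2 := by
  calc |A.reApplyInnerSelf x| ≤ ‖A x‖ * ‖x‖ := (abs_re_le_norm _).trans (norm_inner_le_norm _ _)
    _ ≤ ‖A‖ * ‖x‖ * ‖x‖ := by gcongr; exact A.le_opNorm x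
    _ = ‖A‖ * ‖x‖ ^ 2 := by ring

lemma le_smul_one_of_norm_le (hA : A.IsSymmetric) {c : ℝ} (hc : ‖A‖ ≤ c) :
    A ≤ (c : 𝕜) • 1 := by
  refine ⟨?_, fun x => ?_⟩
  · exact (LinearMap.IsSymmetric.one.smul (conj_ofReal c)).sub hA
  · have h : A.reApplyInnerSelf x ≤ c * ‖x‖ ^ 2 :=
      (le_abs_self _).trans ((abs_reApplyInnerSelf_le A x).trans (by gcongr))
    simpa [reApplyInnerSelf_apply, inner_sub_left, inner_smul_left] using h

lemma norm_le_norm_of_neg_le_of_le (hA : A.IsSymmetric) (hCA : -C ≤ A) (hAC : A ≤ C) :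
    ‖A‖ ≤ ‖C‖ := by
  rw [A.norm_eq_iSup_rayleighQuotient hA]
  refine ciSup_le fun x => le_trans ?_ (C.rayleighQuotient_le_norm x)
  have hle : A.rayleighQuotient x ≤ C.rayleighQuotient x :=
    div_le_div_of_nonneg_right (reApplyInnerSelf_mono hAC x) (by positivity)
  have hge : (-C).rayleighQuotient x ≤ A.rayleighQuotient x :=
    div_le_div_of_nonneg_right (reApplyInnerSelf_mono hCA x) (by positivity)
  rw [rayleighQuotient_neg_apply] at hge
  exact (abs_le.2 ⟨hge, hle⟩).trans (le_abs_self _)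

lemma norm_apply_sq_le_of_isPositive (hA : A.IsPositive) (x : H) :
    ‖A x‖ ^ 2 ≤ ‖A‖ * A.reApplyInnerSelf x := by
  rcases eq_or_ne A 0 with rfl | hA0
  · simp
  have hpos : 0 ≤ A.reApplyInnerSelf ((‖A‖ : 𝕜) • x - A x) := hA.re_inner_nonneg_left _
  have hexp : A.reApplyInnerSelf ((‖A‖ : 𝕜) • x - A x) =
      ‖A‖ ^ 2 * A.reApplyInnerSelf x - 2 * ‖A‖ * ‖A x‖ ^ 2 + A.reApplyInnerSelf (A x) := by
    simp only [reApplyInnerSelf_apply, map_sub, map_smul, inner_sub_left, inner_sub_right,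
      inner_smul_left, inner_smul_right, hA.inner_left_eq_inner_right (A x) x,
      inner_self_eq_norm_sq_to_K, conj_ofReal, re_ofReal_mul, ← ofReal_pow, ofReal_re]
    ring
  have hle : A.reApplyInnerSelf (A x) ≤ ‖A‖ * ‖A x‖ ^ 2 :=
    (le_abs_self _).trans (abs_reApplyInnerSelf_le A (A x))
  refine le_of_mul_le_mul_left ?_ (norm_pos_iff.2 hA0)
  linarith

lemma isPositive_of_tendsto_apply {α : Type*} {l : Filter α} [l.NeBot] {g : α → H →L[𝕜] H}
    (hg : ∀ᶠ i in l, (g i).IsPositive) (hA : ∀ x, Tendsto (fun i => g i x) l (𝓝 (A x))) :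
    A.IsPositive := by
  refine ⟨fun x y => ?_, fun x => ?_⟩
  · exact tendsto_nhds_unique_of_eventuallyEq ((hA x).inner tendsto_const_nhds)
      (tendsto_const_nhds.inner (hA y)) (hg.mono fun i hi => hi.inner_left_eq_inner_right x y)
  · exact ge_of_tendsto ((continuous_re.tendsto _).comp ((hA x).inner tendsto_const_nhds))
      (hg.mono fun i hi => hi.re_inner_nonneg_left x)

lemma norm_le_norm_of_nonneg_of_le (hA : 0 ≤ A) (hAB : A ≤ B) : ‖A‖ ≤ ‖B‖ :=
  norm_le_norm_of_neg_le_of_le ((nonneg_iff_isPositive A).1 hA).isSymmetric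
    ((neg_nonpos.2 (hA.trans hAB)).trans hA) hAB

lemma isBounded_Icc_loewner (A B : H →L[𝕜] H) : Bornology.IsBounded (Set.Icc A B) := by
  refine isBounded_iff_forall_norm_le.2 ⟨‖A‖ + ‖B - A‖, fun C hC => ?_⟩
  calc ‖C‖ ≤ ‖A‖ + ‖C - A‖ := norm_le_insert' C A
    _ ≤ ‖A‖ + ‖B - A‖ := by
      gcongr
      exact norm_le_norm_of_nonneg_of_le (sub_nonneg.2 hC.1) (sub_le_sub_right hC.2 A)

lemma norm_apply_sub_apply_sq_le (hAB : A ≤ B) (hBC : B ≤ C) (x : H) :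
    ‖A x - B x‖ ^ 2 ≤ ‖C - A‖ * (B.reApplyInnerSelf x - A.reApplyInnerSelf x) := by
  have hnonneg : 0 ≤ (B - A).reApplyInnerSelf x := hAB.re_inner_nonneg_left x
  calc ‖A x - B x‖ ^ 2 = ‖(B - A) x‖ ^ 2 := by rw [norm_sub_rev, sub_apply]
    _ ≤ ‖B - A‖ * (B - A).reApplyInnerSelf x := norm_apply_sq_le_of_isPositive hAB x
    _ ≤ ‖C - A‖ * (B - A).reApplyInnerSelf x := by
      gcongr
      exact norm_le_norm_of_nonneg_of_le (sub_nonneg.2 hAB) (sub_le_sub_right hBC A)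
    _ = ‖C - A‖ * (B.reApplyInnerSelf x - A.reApplyInnerSelf x) := by
      simp [reApplyInnerSelf_apply, inner_sub_left]

variable {α : Type*} [Nonempty α] [SemilatticeSup α] {g : α → H →L[𝕜] H}

lemma cauchySeq_apply_of_monotone_of_bddAbove (hg : Monotone g) (hbdd : BddAbove (Set.range g))
    (x : H) : CauchySeq fun i => g i x := by
  obtain ⟨B, hB⟩ := hbdd
  have hgB (i : α) : g i ≤ B := hB ⟨i, rfl⟩
  set r : α → ℝ := fun i => (g i).reApplyInnerSelf x
  have hr_mono : Monotone r := fun i j hij => reApplyInnerSelf_mono (hg hij) x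
  have hr_bdd : BddAbove (Set.range r) :=
    ⟨_, Set.forall_mem_range.2 fun i => reApplyInnerSelf_mono (hgB i) x⟩
  have hr : Tendsto r atTop (𝓝 (⨆ i, r i)) := tendsto_atTop_ciSup hr_mono hr_bdd
  have i₀ : α := Classical.arbitrary α
  refine cauchySeq_of_le_tendsto_0' (fun i => √(‖B - g i‖ * ((⨆ i, r i) - r i)))
    (fun i j hij => ?_) ?_
  · rw [dist_eq_norm]
    refine Real.le_sqrt_of_sq_le ((norm_apply_sub_apply_sq_le (hg hij) (hgB j) x).trans ?_)
    gcongr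
    exact le_ciSup hr_bdd j
  · have hlim : Tendsto (fun i => √(‖B - g i₀‖ * ((⨆ i, r i) - r i))) atTop (𝓝 0) := by
      simpa using ((hr.const_sub (⨆ i, r i)).const_mul ‖B - g i₀‖).sqrt
    refine squeeze_zero' (.of_forall fun i => Real.sqrt_nonneg _) ?_ hlim
    filter_upwards [eventually_ge_atTop i₀] with i hi
    gcongr √(?_ * _)
    · exact sub_nonneg.2 (le_ciSup hr_bdd i)
    · exact norm_le_norm_of_nonneg_of_le (sub_nonneg.2 (hgB i)) (sub_le_sub_left (hg hi) B)

variable [CompleteSpace H]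

theorem exists_isLUB_tendsto_apply_of_monotone (hg : Monotone g) (hbdd : BddAbove (Set.range g)) :
    ∃ T, IsLUB (Set.range g) T ∧ ∀ x, Tendsto (fun i => g i x) atTop (𝓝 (T x)) := by
  choose F hF using fun x =>
    cauchySeq_tendsto_of_complete (cauchySeq_apply_of_monotone_of_bddAbove hg hbdd x)
  obtain ⟨B, hB⟩ := hbdd
  have i₀ : α := Classical.arbitrary α
  have hbounded : Bornology.IsBounded (Set.range fun i : Set.Ici i₀ => g i) :=
    (isBounded_Icc_loewner (g i₀) B).subset
      (Set.range_subset_iff.2 fun i => ⟨hg i.2, hB ⟨i, rfl⟩⟩)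
  let T : H →L[𝕜] H := ofTendstoOfBoundedRange F (fun i : Set.Ici i₀ => g i)
    (tendsto_pi_nhds.2 fun x => tendsto_comp_val_Ici_atTop.2 (hF x)) hbounded
  have hT (x : H) : Tendsto (fun i => g i x) atTop (𝓝 (T x)) := hF x
  refine ⟨T, ⟨Set.forall_mem_range.2 fun i => ?_, fun B hB => ?_⟩, hT⟩
  · exact isPositive_of_tendsto_apply ((eventually_ge_atTop i).mono fun j hij => hg hij)
      fun x => (hT x).sub_const (g i x)
  · exact isPositive_of_tendsto_apply (.of_forall fun i => hB ⟨i, rfl⟩)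
      fun x => (hT x).const_sub (B x)

lemma mul_le_mul_right_of_isStarProjection {Q : H →L[𝕜] H} (hQ : IsStarProjection Q)
    (hAQ : Commute A Q) (hBQ : Commute B Q) (hAB : A ≤ B) : A * Q ≤ B * Q := by
  have hconj : Q * (B - A) * Q = B * Q - A * Q := by
    rw [← (hBQ.sub_left hAQ).eq, mul_assoc, hQ.isIdempotentElem.eq, sub_mul]
  have hpos : (Q * (B - A) * adjoint Q).IsPositive := hAB.conj_adjoint Q
  rwa [← star_eq_adjoint, hQ.isSelfAdjoint.star_eq, hconj] at hpos

lemma isSelfAdjoint_iff_of_le (hAB : A ≤ B) : IsSelfAdjoint A ↔ IsSelfAdjoint B := by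
  have hsub : IsSelfAdjoint (B - A) := IsPositive.isSelfAdjoint hAB
  exact ⟨fun hA => by simpa using hsub.add hA, fun hB => by simpa using hB.sub hsub⟩

end Operator

section Net

variable {𝕜 H ι : Type*} [RCLike 𝕜] [NormedAddCommGroup H] [InnerProductSpace 𝕜 H]
  [CompleteSpace H] [LinearOrder ι] {a b : ι} {P f : ι → H →L[𝕜] H}

lemma leftSum_sort_le_leftSum_sort {g : ι → H →L[𝕜] H}
    (hP : ∀ t ∈ Set.Icc a b, IsStarProjection (P t))
    (hPP : ∀ s ∈ Set.Icc a b, ∀ t ∈ Set.Icc a b, s ≤ t → P s * P t = P s)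
    (hfP : ∀ s ∈ Set.Icc a b, ∀ t ∈ Set.Icc a b, s ≤ t → Commute (f s) (P t))
    (hgP : ∀ s ∈ Set.Icc a b, ∀ t ∈ Set.Icc a b, s ≤ t → Commute (g s) (P t))
    (hfg : ∀ t ∈ Set.Icc a b, f t ≤ g t) {θ : Finset ι} (hθ : IsPartition a b θ) :
    leftSum f P θ.sort ≤ leftSum g P θ.sort := by
  refine leftSum_le_leftSum (fun t ht u hu htu => ?_) (Finset.pairwise_sort ..)
    hθ.mem_Icc_of_mem_sort
  exact mul_le_mul_right_of_isStarProjection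
    ((hP t ht).sub_of_mul_eq_left (hP u hu) (hPP t ht u hu htu))
    ((hfP t ht u hu htu).sub_right (hfP t ht t ht le_rfl))
    ((hgP t ht u hu htu).sub_right (hgP t ht t ht le_rfl)) (hfg t ht)

lemma leftSum_sort_mem_Icc_of_norm_le (hP : ∀ t ∈ Set.Icc a b, IsStarProjection (P t))
    (hPP : ∀ s ∈ Set.Icc a b, ∀ t ∈ Set.Icc a b, s ≤ t → P s * P t = P s)
    (hfa : IsSelfAdjoint (f a)) (hf : MonotoneOn f (Set.Icc a b))
    (hfP : ∀ s ∈ Set.Icc a b, ∀ t ∈ Set.Icc a b, s ≤ t → Commute (f s) (P t))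
    {c : ℝ} (hca : ‖f a‖ ≤ c) (hcb : ‖f b‖ ≤ c) {θ : Finset ι} (hθ : IsPartition a b θ) :
    leftSum f P θ.sort ∈ Set.Icc (-((c : 𝕜) • (P b - P a))) ((c : 𝕜) • (P b - P a)) := by
  have ha : a ∈ Set.Icc a b := hθ.2.2 a hθ.1
  have hb : b ∈ Set.Icc a b := hθ.2.2 b hθ.2.1
  have hfb : IsSelfAdjoint (f b) := (isSelfAdjoint_iff_of_le (hf ha hb ha.2)).1 hfa
  obtain ⟨E, hE⟩ : ∃ E : H →L[𝕜] H, E = (c : 𝕜) • 1 := ⟨_, rfl⟩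
  have hEP : E * (P b - P a) = (c : 𝕜) • (P b - P a) := by rw [hE, smul_mul_assoc, one_mul]
  have hcomm (B : H →L[𝕜] H) : Commute E B := hE ▸ (Commute.one_left B).smul_left _
  have hle : ∀ t ∈ Set.Icc a b, f t ≤ E := fun t ht =>
    (hf ht hb ht.2).trans (hE ▸ le_smul_one_of_norm_le hfb.isSymmetric hcb)
  have hge : ∀ t ∈ Set.Icc a b, -E ≤ f t := fun t ht =>
    (neg_le.1 (hE ▸ le_smul_one_of_norm_le hfa.neg.isSymmetric (by rwa [norm_neg]))).trans
      (hf ha ht ht.1)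
  rw [← hEP, ← neg_mul, ← hθ.leftSum_sort_const E P, ← hθ.leftSum_sort_const (-E) P]
  exact ⟨leftSum_sort_le_leftSum_sort hP hPP (fun _ _ _ _ _ => (hcomm _).neg_left) hfP hge hθ,
    leftSum_sort_le_leftSum_sort hP hPP hfP (fun _ _ _ _ _ => hcomm _) hle hθ⟩

lemma monotone_leftSum_sort (hP : ∀ t ∈ Set.Icc a b, IsStarProjection (P t))
    (hPP : ∀ s ∈ Set.Icc a b, ∀ t ∈ Set.Icc a b, s ≤ t → P s * P t = P s)
    (hf : MonotoneOn f (Set.Icc a b))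
    (hfP : ∀ s ∈ Set.Icc a b, ∀ t ∈ Set.Icc a b, s ≤ t → Commute (f s) (P t)) :
    Monotone fun θ : {θ // IsPartition a b θ} => leftSum f P θ.1.sort := by
  refine fun θ θ' hsub => IsPartition.leftSum_sort_le_of_subset
    (fun t ht u hu v hv htu huv => ?_) θ.2 θ'.2 hsub
  exact mul_le_mul_right_of_isStarProjection
    ((hP u hu).sub_of_mul_eq_left (hP v hv) (hPP u hu v hv huv))
    ((hfP t ht v hv (htu.trans huv)).sub_right (hfP t ht u hu htu))
    ((hfP u hu v hv huv).sub_right (hfP u hu u hu le_rfl)) (hf ht hu htu)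

theorem sigma_net_converges_strongly_general (hab : a ≤ b)
    (hP : ∀ t ∈ Set.Icc a b, IsStarProjection (P t))
    (hPP : ∀ s ∈ Set.Icc a b, ∀ t ∈ Set.Icc a b, s ≤ t → P s * P t = P s)
    (hfa : IsSelfAdjoint (f a)) (hf : MonotoneOn f (Set.Icc a b))
    (hfP : ∀ s ∈ Set.Icc a b, ∀ t ∈ Set.Icc a b, s ≤ t → Commute (f s) (P t)) :
    ∃ T : H →L[𝕜] H, IsSelfAdjoint T ∧ ‖T‖ ≤ max ‖f a‖ ‖f b‖ ∧
      IsLUB (Set.range fun θ : {θ // IsPartition a b θ} => leftSum f P θ.1.sort) T ∧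
      ∀ ξ, Tendsto (fun θ : {θ // IsPartition a b θ} => leftSum f P θ.1.sort ξ) atTop
        (𝓝 (T ξ)) := by
  set c : ℝ := max ‖f a‖ ‖f b‖
  set C : H →L[𝕜] H := (c : 𝕜) • (P b - P a)
  have ha := Set.left_mem_Icc.2 hab
  have hb := Set.right_mem_Icc.2 hab
  have hPab : IsStarProjection (P b - P a) :=
    (hP a ha).sub_of_mul_eq_left (hP b hb) (hPP a ha b hb hab)
  have hmem (θ : {θ // IsPartition a b θ}) : leftSum f P θ.1.sort ∈ Set.Icc (-C) C :=
    leftSum_sort_mem_Icc_of_norm_le hP hPP hfa hf hfP (le_max_left ..) (le_max_right ..) θ.2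
  have hne := nonempty_isPartition hab
  obtain ⟨T, hlub, hlim⟩ := exists_isLUB_tendsto_apply_of_monotone
    (monotone_leftSum_sort hP hPP hf hfP) ⟨C, Set.forall_mem_range.2 fun θ => (hmem θ).2⟩
  have hTC : T ≤ C := hlub.2 (Set.forall_mem_range.2 fun θ => (hmem θ).2)
  have hCT : -C ≤ T := hne.elim fun θ => (hmem θ).1.trans (hlub.1 ⟨θ, rfl⟩)
  have hCsa : IsSelfAdjoint C := .smul (conj_ofReal c) hPab.isSelfAdjoint
  have hCnorm : ‖C‖ ≤ c := by
    have hc : 0 ≤ c := (norm_nonneg _).trans (le_max_left ..)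
    calc ‖C‖ = c * ‖P b - P a‖ := by rw [norm_smul, norm_of_nonneg hc]
      _ ≤ c := mul_le_of_le_one_right hc hPab.norm_le
  have hTsa : IsSelfAdjoint T := (isSelfAdjoint_iff_of_le hTC).2 hCsa
  exact ⟨T, hTsa, (norm_le_norm_of_neg_le_of_le hTsa.isSymmetric hCT hTC).trans hCnorm, hlub, hlim⟩

end Net

/-- For increasing projections (P_t) and hermitian, increasing,
adapted-commuting f, there is a bounded self-adjoint operator T with
‖T‖ ≤ max{‖f(a)‖, ‖f(b)‖} such that σ_θ ≤ T for every partition θ of [a,b], and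
σ_θ → T in the strong operator topology along the net of partitions directed by
refinement. -/
theorem sigma_net_converges_strongly
    {H : Type*} [NormedAddCommGroup H] [InnerProductSpace ℂ H] [CompleteSpace H]
    (a b : ℝ) (ha : 0 ≤ a) (hab : a < b)
    (P : ℝ → H →L[ℂ] H)
    (hP_proj : ∀ s, 0 ≤ s → IsSelfAdjoint (P s) ∧ P s ∘L P s = P s)
    (hP_mono : ∀ s u, 0 ≤ s → s ≤ u → P s ∘L P u = P s ∧ P u ∘L P s = P s)
    (f : ℝ → H →L[ℂ] H)
    (hf_herm : ∀ s, 0 ≤ s → IsSelfAdjoint (f s))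
    (hf_incr : ∀ u v, 0 ≤ u → u ≤ v → (f v - f u).IsPositive)
    (hf_adapted : ∀ s u, 0 ≤ s → s ≤ u → f s ∘L P u = P u ∘L f s) :
    ∃ T : H →L[ℂ] H, IsSelfAdjoint T ∧ ‖T‖ ≤ max ‖f a‖ ‖f b‖ ∧
      (∀ θ : Finset ℝ, IsPartitionOf a b θ → (T - sigmaSum f P θ).IsPositive) ∧
      (∀ ξ : H, ∀ ε > (0 : ℝ), ∃ θ₀ : Finset ℝ, IsPartitionOf a b θ₀ ∧
        ∀ θ : Finset ℝ, IsPartitionOf a b θ → θ₀ ⊆ θ →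
          ‖sigmaSum f P θ ξ - T ξ‖ < ε) := by
  have h0 {t : ℝ} (ht : t ∈ Set.Icc a b) : 0 ≤ t := ha.trans ht.1
  obtain ⟨T, hsa, hnorm, hlub, hlim⟩ := sigma_net_converges_strongly_general hab.le
    (fun t ht => ⟨(hP_proj t (h0 ht)).2, (hP_proj t (h0 ht)).1⟩)
    (fun s hs t _ hst => (hP_mono s t (h0 hs) hst).1) (hf_herm a ha)
    (fun s hs t _ hst => hf_incr s t (h0 hs) hst)
    (fun s hs t _ hst => hf_adapted s t (h0 hs) hst)
  refine ⟨T, hsa, hnorm, fun θ hθ => hlub.1 ⟨⟨θ, hθ⟩, rfl⟩, fun ξ ε hε => ?_⟩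
  have := nonempty_isPartition hab.le
  obtain ⟨θ₀, hθ₀⟩ := Metric.tendsto_atTop.1 (hlim ξ) ε hε
  refine ⟨θ₀, θ₀.2, fun θ hθ hsub => ?_⟩
  rw [← dist_eq_norm]
  exact hθ₀ ⟨θ, hθ⟩ hsub
end

section
/- Let (P_t)_{t≥0} be an increasing family of orthogonal projections on H, let f : [0,∞) → B(H) be adapted-commuting with respect to (P_t), let ξ ∈ H, and let ε, δ > 0 be such that ‖f(u) − f(v)‖ ≤ ε/(2‖ξ‖) whenever u, v ∈ [a,b] and |u − v| ≤ δ. Then for any two partitions θ₁, θ₂ of [a,b] both of mesh less than δ, one has ‖σ_{θ₁} ξ − σ_{θ₂} ξ‖ ≤ ε. -/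
/-- `meshOf θ` is the mesh max_{1≤k≤m}(t_k − t_{k−1}) of the partition θ. -/
noncomputable def meshOf (θ : Finset ℝ) : ℝ :=
  (((θ.sort (· ≤ ·)).zip (θ.sort (· ≤ ·)).tail).map (fun p => p.2 - p.1)).foldr max 0

/-!
The sum over a partition `θ` does not change when `θ` is refined and `f` is replaced by its step
function on `θ`. Over a common refinement the difference of the two sums is therefore
`∑ A s (P t - P s) ξ`, where `A s` is a difference of values of `f` at points less than `δ` apart.
Adaptedness keeps `A s (P t - P s) ξ` in the range of `P t - P s`, so the summands are mutually
orthogonal, and by Pythagoras an operator bound `‖A s‖ ≤ C` passes to the whole sum.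
-/

section LeftRiemannSum

variable {ι R : Type*} [NonUnitalNonAssocRing R]

/-- The left Riemann–Stieltjes sum `∑ h (t (k - 1)) * (P (t k) - P (t (k - 1)))` along a list
`t 0, t 1, …, t m`. Lists, rather than finsets, allow induction on the first interval. -/
def leftRiemannSum (h P : ι → R) (l : List ι) : R :=
  ((l.zip l.tail).map fun p => h p.1 * (P p.2 - P p.1)).sum

@[simp]
lemma leftRiemannSum_singleton (h P : ι → R) (s : ι) : leftRiemannSum h P [s] = 0 := rfl

lemma leftRiemannSum_cons_cons (h P : ι → R) (s t : ι) (l : List ι) :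
    leftRiemannSum h P (s :: t :: l) = h s * (P t - P s) + leftRiemannSum h P (t :: l) := by
  simp [leftRiemannSum]

lemma leftRiemannSum_sub (h k P : ι → R) (l : List ι) :
    leftRiemannSum (h - k) P l = leftRiemannSum h P l - leftRiemannSum k P l := by
  simpa only [leftRiemannSum, Pi.sub_apply, sub_mul, Multiset.map_coe, Multiset.sum_coe] using
    Multiset.sum_map_sub (m := (l.zip l.tail : Multiset (ι × ι)))

lemma isGreatest_head_of_forall_lt [Preorder ι] {c x : ι} {l : List ι} (hcx : c ≤ x)
    (hl : ∀ q ∈ l, x < q) : IsGreatest {q | q ∈ c :: l ∧ q ≤ x} c := by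
  refine ⟨⟨List.mem_cons_self, hcx⟩, ?_⟩
  rintro q ⟨hq, hqx⟩
  rcases List.mem_cons.1 hq with rfl | hq
  · exact le_rfl
  · exact absurd hqx (hl q hq).not_ge

lemma isGreatest_cons_of_le [Preorder ι] {c t x p : ι} {l : List ι} (hct : c ≤ t) (htx : t ≤ x)
    (hp : IsGreatest {q | q ∈ t :: l ∧ q ≤ x} p) :
    IsGreatest {q | q ∈ c :: t :: l ∧ q ≤ x} p := by
  refine ⟨⟨List.mem_cons_of_mem c hp.1.1, hp.1.2⟩, ?_⟩
  rintro q ⟨hq, hqx⟩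
  rcases List.mem_cons.1 hq with rfl | hq
  · exact hct.trans (hp.2 ⟨List.mem_cons_self, htx⟩)
  · exact hp.2 ⟨hq, hqx⟩

-- The induction allows the fine list to start at a point `s` inside the first coarse interval,
-- whose part to the left of `s` is accounted for by `f c * (P s - P c)`.
lemma leftRiemannSum_eq_of_sublist [Preorder ι] (f h P : ι → R) {l m : List ι}
    (hlm : l.Sublist m) :
    ∀ {c s : ι}, c ≤ s → (s :: m).Pairwise (· < ·) → l.getLastD c = m.getLastD s → h s = f c →
      (∀ x ∈ m, ∀ p, IsGreatest {q | q ∈ c :: l ∧ q ≤ x} p → h x = f p) →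
      leftRiemannSum f P (c :: l) = f c * (P s - P c) + leftRiemannSum h P (s :: m) := by
  induction hlm with
  | slnil =>
    intro c s _ _ hlast _ _
    obtain rfl : c = s := hlast
    simp
  | @cons l m t hlm ih =>
    intro c s hcs hm hlast hs hstep
    obtain ⟨hsm, htm⟩ := List.pairwise_cons.1 hm
    have hct : c ≤ t := hcs.trans (hsm t List.mem_cons_self).le
    have hc_greatest : IsGreatest {q | q ∈ c :: l ∧ q ≤ t} c :=
      isGreatest_head_of_forall_lt hct fun q hq => (List.pairwise_cons.1 htm).1 q (hlm.subset hq)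
    rw [ih hct htm (hlast.trans List.getLastD_cons) (hstep t List.mem_cons_self c hc_greatest)
        fun x hx => hstep x (List.mem_cons_of_mem t hx),
      leftRiemannSum_cons_cons, hs, ← add_assoc, ← mul_add, add_comm (P s - P c),
      sub_add_sub_cancel]
  | @cons_cons l m t _ ih =>
    intro c s hcs hm hlast hs hstep
    obtain ⟨hsm, htm⟩ := List.pairwise_cons.1 hm
    have hct : c ≤ t := hcs.trans (hsm t List.mem_cons_self).le
    have ht : h t = f t := hstep t List.mem_cons_self t ⟨⟨by simp, le_rfl⟩, fun q hq => hq.2⟩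
    have hstep' : ∀ x ∈ m, ∀ p, IsGreatest {q | q ∈ t :: l ∧ q ≤ x} p → h x = f p :=
      fun x hx p hp => hstep x (List.mem_cons_of_mem t hx) p
        (isGreatest_cons_of_le hct ((List.pairwise_cons.1 htm).1 x hx).le hp)
    have hlast' : l.getLastD t = m.getLastD t := by simpa only [List.getLastD_cons] using hlast
    rw [leftRiemannSum_cons_cons, leftRiemannSum_cons_cons, ih le_rfl htm hlast' ht hstep', hs,
      sub_self, mul_zero, zero_add, ← add_assoc, ← mul_add, add_comm (P s - P c),
      sub_add_sub_cancel]

end LeftRiemannSum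

section LeftNode

variable {α : Type*} [ConditionallyCompleteLinearOrder α] {θ : Finset α} {x y : α}

/-- The largest point of the partition `θ` that is at most `x`, so that `f ∘ leftNode θ` is the
step function of `f` on `θ`. It is a junk value if no point of `θ` is at most `x`. -/
noncomputable def leftNode (θ : Finset α) (x : α) : α :=
  sSup {t | t ∈ θ ∧ t ≤ x}

lemma isGreatest_leftNode_of_mem (hy : y ∈ θ) (hyx : y ≤ x) :
    IsGreatest {t | t ∈ θ ∧ t ≤ x} (leftNode θ x) :=
  ⟨Set.Nonempty.csSup_mem ⟨y, hy, hyx⟩ (θ.finite_toSet.subset fun _ ht => ht.1),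
    fun _ ht => le_csSup ⟨x, fun _ hz => hz.2⟩ ht⟩

lemma leftNode_eq_of_isGreatest (h : IsGreatest {t | t ∈ θ ∧ t ≤ x} y) : leftNode θ x = y :=
  h.csSup_eq

lemma leftNode_of_mem (hx : x ∈ θ) : leftNode θ x = x :=
  leftNode_eq_of_isGreatest ⟨⟨hx, le_rfl⟩, fun _ ht => ht.2⟩

end LeftNode

section Partition

lemma exists_mem_zip_le_lt_of_lt_getLastD {ι : Type*} [LinearOrder ι] {x : ι} :
    ∀ {c : ι} {l : List ι}, c ≤ x → x < l.getLastD c → ∃ p ∈ (c :: l).zip l, p.1 ≤ x ∧ x < p.2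
  | _, [], hcx, hx => absurd hx hcx.not_gt
  | c, d :: l, hcx, hx => by
    rcases lt_or_ge x d with hxd | hdx
    · exact ⟨(c, d), List.mem_cons_self, hcx, hxd⟩
    · obtain ⟨p, hp, hpx⟩ :=
        exists_mem_zip_le_lt_of_lt_getLastD hdx (hx.trans_eq List.getLastD_cons)
      exact ⟨p, List.mem_cons_of_mem _ hp, hpx⟩

lemma sub_le_meshOf {θ : Finset ℝ} {p : ℝ × ℝ}
    (hp : p ∈ (θ.sort (· ≤ ·)).zip (θ.sort (· ≤ ·)).tail) : p.2 - p.1 ≤ meshOf θ :=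
  List.le_max_of_le' 0 (List.mem_map_of_mem hp) le_rfl

lemma meshOf_nonneg (θ : Finset ℝ) : 0 ≤ meshOf θ := by
  unfold meshOf
  generalize ((θ.sort (· ≤ ·)).zip (θ.sort (· ≤ ·)).tail).map (fun p => p.2 - p.1) = l
  induction l with
  | nil => exact le_rfl
  | cons d l ih => exact ih.trans (le_max_right _ _)

variable {a b x : ℝ} {θ η : Finset ℝ}

lemma IsPartitionOf.union (hθ : IsPartitionOf a b θ) (hη : IsPartitionOf a b η) :
    IsPartitionOf a b (θ ∪ η) :=
  ⟨Finset.mem_union_left _ hθ.1, Finset.mem_union_left _ hθ.2.1, fun x hx =>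
    (Finset.mem_union.1 hx).elim (hθ.2.2 x) (hη.2.2 x)⟩

lemma IsPartitionOf.sort_eq_cons (hθ : IsPartitionOf a b θ) :
    θ.sort (· ≤ ·) = a :: (θ.erase a).sort (· ≤ ·) := by
  rw [← Finset.sort_insert (· ≤ ·) (fun x hx => (hθ.2.2 x (Finset.mem_of_mem_erase hx)).1)
    (Finset.notMem_erase a θ), Finset.insert_erase hθ.1]

lemma IsPartitionOf.getLastD_sort_erase (hθ : IsPartitionOf a b θ) :
    ((θ.erase a).sort (· ≤ ·)).getLastD a = b := by
  have hmem : ∀ x, x ∈ a :: (θ.erase a).sort (· ≤ ·) ↔ x ∈ θ := fun x => by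
    rw [← hθ.sort_eq_cons, Finset.mem_sort]
  have hsorted : (a :: (θ.erase a).sort (· ≤ ·)).Pairwise (· ≤ ·) :=
    hθ.sort_eq_cons ▸ Finset.pairwise_sort θ (· ≤ ·)
  refine le_antisymm (hθ.2.2 _ ((hmem _).1 List.getLastD_mem_cons)).2 ?_
  rw [← List.getLast_eq_getLastD (List.cons_ne_nil _ _)]
  exact hsorted.rel_getLast ((hmem b).2 hθ.2.1)

lemma IsPartitionOf.isGreatest_leftNode (hθ : IsPartitionOf a b θ) (hx : x ∈ Set.Icc a b) :
    IsGreatest {t | t ∈ θ ∧ t ≤ x} (leftNode θ x) :=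
  isGreatest_leftNode_of_mem hθ.1 hx.1

lemma IsPartitionOf.leftNode_mem_Icc (hθ : IsPartitionOf a b θ) (hx : x ∈ Set.Icc a b) :
    leftNode θ x ∈ Set.Icc a b :=
  hθ.2.2 _ (hθ.isGreatest_leftNode hx).1.1

lemma IsPartitionOf.leftNode_le (hθ : IsPartitionOf a b θ) (hx : x ∈ Set.Icc a b) :
    leftNode θ x ≤ x :=
  (hθ.isGreatest_leftNode hx).1.2

lemma IsPartitionOf.sub_leftNode_le_meshOf (hθ : IsPartitionOf a b θ) (hx : x ∈ Set.Icc a b) :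
    x - leftNode θ x ≤ meshOf θ := by
  rcases hx.2.eq_or_lt with rfl | hxb
  · rw [leftNode_of_mem hθ.2.1, sub_self]
    exact meshOf_nonneg θ
  · obtain ⟨p, hp, hpx, hxp⟩ :=
      exists_mem_zip_le_lt_of_lt_getLastD hx.1 (hxb.trans_eq hθ.getLastD_sort_erase.symm)
    have hp_sort : p ∈ (θ.sort (· ≤ ·)).zip (θ.sort (· ≤ ·)).tail := by
      simpa only [hθ.sort_eq_cons, List.tail_cons] using hp
    have hp_le : p.1 ≤ leftNode θ x :=
      (hθ.isGreatest_leftNode hx).2 ⟨(Finset.mem_sort _).1 (List.of_mem_zip hp_sort).1, hpx⟩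
    linarith [sub_le_meshOf hp_sort]

lemma IsPartitionOf.abs_leftNode_sub_leftNode_le (hθ : IsPartitionOf a b θ)
    (hη : IsPartitionOf a b η) (hx : x ∈ Set.Icc a b) :
    |leftNode θ x - leftNode η x| ≤ max (meshOf θ) (meshOf η) := by
  have h₁ := hθ.sub_leftNode_le_meshOf hx
  have h₂ := hη.sub_leftNode_le_meshOf hx
  have := hθ.leftNode_le hx
  have := hη.leftNode_le hx
  rw [abs_le]
  constructor <;> linarith [le_max_left (meshOf θ) (meshOf η), le_max_right (meshOf θ) (meshOf η)]

end Partition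

section Orthogonality

variable {𝕜 H : Type*} [RCLike 𝕜] [SeminormedAddCommGroup H] [InnerProductSpace 𝕜 H]

lemma inner_eq_zero_of_isSymmetric {T : H →ₗ[𝕜] H} (hT : T.IsSymmetric) {v w : H}
    (hv : T v = v) (hw : T w = 0) : inner 𝕜 v w = 0 := by
  rw [← hv, hT, hw, inner_zero_right]

lemma norm_add_le_mul_norm_add_of_inner_eq_zero {x y v w : H} {C : ℝ} (hC : 0 ≤ C)
    (hxy : inner 𝕜 x y = 0) (hvw : inner 𝕜 v w = 0) (hvx : ‖v‖ ≤ C * ‖x‖) (hwy : ‖w‖ ≤ C * ‖y‖) :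
    ‖v + w‖ ≤ C * ‖x + y‖ := by
  refine le_of_sq_le_sq ?_ (by positivity)
  calc ‖v + w‖ ^ 2 = ‖v‖ ^ 2 + ‖w‖ ^ 2 := by
        simpa only [sq] using norm_add_sq_eq_norm_sq_add_norm_sq_of_inner_eq_zero v w hvw
    _ ≤ (C * ‖x‖) ^ 2 + (C * ‖y‖) ^ 2 := by gcongr
    _ = C ^ 2 * (‖x‖ ^ 2 + ‖y‖ ^ 2) := by ring
    _ = C ^ 2 * ‖x + y‖ ^ 2 := by
        congr 1
        simpa only [sq] using (norm_add_sq_eq_norm_sq_add_norm_sq_of_inner_eq_zero x y hxy).symm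
    _ = (C * ‖x + y‖) ^ 2 := (mul_pow ..).symm

end Orthogonality

section IncreasingProjections

variable {ι 𝕜 H : Type*} [RCLike 𝕜] [NormedAddCommGroup H] [InnerProductSpace 𝕜 H]

/-- `(P t)_{t ∈ S}` is an increasing family of orthogonal projections. Idempotency is the case
`s = t` of `mul_eq_left`; symmetry is used instead of `IsSelfAdjoint`, which would need `H` to be
complete for the adjoint to exist. -/
structure IsIncreasingProjectionOn [Preorder ι] (P : ι → H →L[𝕜] H) (S : Set ι) : Prop where
  isSymmetric : ∀ ⦃t⦄, t ∈ S → (P t : H →ₗ[𝕜] H).IsSymmetric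
  mul_eq_left : ∀ ⦃s⦄, s ∈ S → ∀ ⦃t⦄, t ∈ S → s ≤ t → P s * P t = P s

/-- The map `A` is adapted-commuting with respect to `P`, with all times restricted
to `S`. -/
def IsAdaptedOn [Preorder ι] {R : Type*} [Mul R] (A P : ι → R) (S : Set ι) : Prop :=
  ∀ ⦃s⦄, s ∈ S → ∀ ⦃t⦄, t ∈ S → s ≤ t → Commute (A s) (P t)

lemma IsAdaptedOn.sub [Preorder ι] {R : Type*} [NonUnitalNonAssocRing R] {A B P : ι → R}
    {S : Set ι} (hA : IsAdaptedOn A P S) (hB : IsAdaptedOn B P S) : IsAdaptedOn (A - B) P S :=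
  fun _ hs _ ht hst => (hA hs ht hst).sub_left (hB hs ht hst)

lemma IsAdaptedOn.comp_leftNode {R : Type*} [Mul R] {f P : ℝ → R} {a b : ℝ}
    {θ : Finset ℝ} (hf : IsAdaptedOn f P (Set.Icc a b)) (hθ : IsPartitionOf a b θ) :
    IsAdaptedOn (f ∘ leftNode θ) P (Set.Icc a b) :=
  fun _ hs _ ht hst => hf (hθ.leftNode_mem_Icc hs) ht ((hθ.leftNode_le hs).trans hst)

namespace IsIncreasingProjectionOn

variable [Preorder ι] {P A : ι → H →L[𝕜] H} {S : Set ι} {s t : ι}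

lemma mul_eq_right (hP : IsIncreasingProjectionOn P S) (hs : s ∈ S) (ht : t ∈ S) (hst : s ≤ t) :
    P t * P s = P s := by
  ext x
  refine ext_inner_right 𝕜 fun y => ?_
  calc inner 𝕜 (P t (P s x)) y = inner 𝕜 x ((P s * P t) y) :=
        (hP.isSymmetric ht _ _).trans (hP.isSymmetric hs _ _)
    _ = inner 𝕜 (P s x) y := by
        rw [hP.mul_eq_left hs ht hst]
        exact (hP.isSymmetric hs x y).symm

lemma mul_self_eq (hP : IsIncreasingProjectionOn P S) (ht : t ∈ S) : P t * P t = P t :=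
  hP.mul_eq_left ht ht le_rfl

lemma mul_sub_eq_sub (hP : IsIncreasingProjectionOn P S) (hs : s ∈ S) (ht : t ∈ S) (hst : s ≤ t) :
    P t * (P t - P s) = P t - P s := by
  rw [mul_sub, hP.mul_self_eq ht, hP.mul_eq_right hs ht hst]

lemma apply_sub_apply_eq_zero (hP : IsIncreasingProjectionOn P S) (ht : t ∈ S) (ξ : H) :
    P t (ξ - P t ξ) = 0 := by
  rw [map_sub, sub_eq_zero]
  exact (DFunLike.congr_fun (hP.mul_self_eq ht) ξ).symm

lemma norm_sub_apply_le (hP : IsIncreasingProjectionOn P S) (ht : t ∈ S) (ξ : H) :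
    ‖ξ - P t ξ‖ ≤ ‖ξ‖ := by
  have horth : inner 𝕜 (P t ξ) (ξ - P t ξ) = 0 :=
    inner_eq_zero_of_isSymmetric (hP.isSymmetric ht) (DFunLike.congr_fun (hP.mul_self_eq ht) ξ)
      (hP.apply_sub_apply_eq_zero ht ξ)
  have hle := norm_add_le_mul_norm_add_of_inner_eq_zero zero_le_one horth
    (inner_zero_left (ξ - P t ξ)) (by simp) (one_mul ‖ξ - P t ξ‖).ge
  simpa only [zero_add, one_mul, add_sub_cancel] using hle

lemma mul_leftRiemannSum_eq_zero (hP : IsIncreasingProjectionOn P S) (hA : IsAdaptedOn A P S)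
    {u : ι} (hu : u ∈ S) :
    ∀ {s : ι} {l : List ι}, u ≤ s → (∀ x ∈ s :: l, x ∈ S) → (s :: l).Pairwise (· ≤ ·) →
      P u * leftRiemannSum A P (s :: l) = 0
  | _, [], _, _, _ => mul_zero _
  | s, t :: l, hus, hl, hsorted => by
    obtain ⟨hs, hl'⟩ := List.forall_mem_cons.1 hl
    have ht : t ∈ S := hl' t List.mem_cons_self
    obtain ⟨hs_le, htl⟩ := List.pairwise_cons.1 hsorted
    have hst : s ≤ t := hs_le t List.mem_cons_self
    have hhead : P u * (A s * (P t - P s)) = 0 := calc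
      P u * (A s * (P t - P s)) = P u * P s * (A s * (P t - P s)) := by
        rw [hP.mul_eq_left hu hs hus]
      _ = P u * A s * (P s * (P t - P s)) := by
        simp only [mul_assoc, (hA hs hs le_rfl).left_comm]
      _ = 0 := by
        rw [mul_sub, hP.mul_eq_left hs ht hst, hP.mul_self_eq hs, sub_self, mul_zero]
    rw [leftRiemannSum_cons_cons, mul_add, hhead, zero_add]
    exact mul_leftRiemannSum_eq_zero hP hA hu (hus.trans hst) hl' htl

lemma norm_leftRiemannSum_apply_le (hP : IsIncreasingProjectionOn P S) (hA : IsAdaptedOn A P S)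
    {C : ℝ} (hAC : ∀ x ∈ S, ‖A x‖ ≤ C) (ξ : H) :
    ∀ {s : ι} {l : List ι}, (∀ x ∈ s :: l, x ∈ S) → (s :: l).Pairwise (· ≤ ·) →
      ‖leftRiemannSum A P (s :: l) ξ‖ ≤ C * ‖ξ - P s ξ‖
  | s, [], hl, _ => by
    have hC : 0 ≤ C := (norm_nonneg _).trans (hAC s (hl s List.mem_cons_self))
    simpa using mul_nonneg hC (norm_nonneg (ξ - P s ξ))
  | s, t :: l, hl, hsorted => by
    obtain ⟨hs, hl'⟩ := List.forall_mem_cons.1 hl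
    have ht : t ∈ S := hl' t List.mem_cons_self
    obtain ⟨hs_le, htl⟩ := List.pairwise_cons.1 hsorted
    have hst : s ≤ t := hs_le t List.mem_cons_self
    have hfix : P t ((P t - P s) ξ) = (P t - P s) ξ :=
      DFunLike.congr_fun (hP.mul_sub_eq_sub hs ht hst) ξ
    have hfix_head : P t ((A s * (P t - P s)) ξ) = (A s * (P t - P s)) ξ := by
      refine DFunLike.congr_fun (?_ : P t * (A s * (P t - P s)) = A s * (P t - P s)) ξ
      rw [← (hA hs ht hst).left_comm, hP.mul_sub_eq_sub hs ht hst]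
    have hkill_tail : P t (leftRiemannSum A P (t :: l) ξ) = 0 :=
      DFunLike.congr_fun (hP.mul_leftRiemannSum_eq_zero hA ht le_rfl hl' htl) ξ
    calc ‖leftRiemannSum A P (s :: t :: l) ξ‖
        = ‖(A s * (P t - P s)) ξ + leftRiemannSum A P (t :: l) ξ‖ := by
          rw [leftRiemannSum_cons_cons, add_apply]
      _ ≤ C * ‖(P t - P s) ξ + (ξ - P t ξ)‖ :=
          norm_add_le_mul_norm_add_of_inner_eq_zero ((norm_nonneg _).trans (hAC s hs))
            (inner_eq_zero_of_isSymmetric (hP.isSymmetric ht) hfix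
              (hP.apply_sub_apply_eq_zero ht ξ))
            (inner_eq_zero_of_isSymmetric (hP.isSymmetric ht) hfix_head hkill_tail)
            ((A s).le_of_opNorm_le (hAC s hs) _)
            (norm_leftRiemannSum_apply_le hP hA hAC ξ hl' htl)
      _ = C * ‖ξ - P s ξ‖ := by rw [sub_apply, add_comm, sub_add_sub_cancel]

end IsIncreasingProjectionOn

end IncreasingProjections

section SigmaSum

variable {H : Type*} [NormedAddCommGroup H] [InnerProductSpace ℂ H]

lemma sigmaSum_eq_leftRiemannSum (f P : ℝ → H →L[ℂ] H) (θ : Finset ℝ) :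
    sigmaSum f P θ = leftRiemannSum f P (θ.sort (· ≤ ·)) := rfl

lemma sigmaSum_sub (f g P : ℝ → H →L[ℂ] H) (θ : Finset ℝ) :
    sigmaSum (f - g) P θ = sigmaSum f P θ - sigmaSum g P θ :=
  leftRiemannSum_sub f g P _

variable {a b C : ℝ} {θ η : Finset ℝ}

lemma sigmaSum_comp_leftNode_of_subset (f P : ℝ → H →L[ℂ] H)
    (hθ : IsPartitionOf a b θ) (hη : IsPartitionOf a b η) (hθη : θ ⊆ η) :
    sigmaSum (f ∘ leftNode θ) P η = sigmaSum f P θ := by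
  have hsub : ((θ.erase a).sort (· ≤ ·)).Sublist ((η.erase a).sort (· ≤ ·)) := by
    refine List.sublist_of_subperm_of_sortedLE (List.Nodup.subperm (Finset.sort_nodup _ _) ?_)
      (Finset.sortedLT_sort _).sortedLE (Finset.sortedLT_sort _).sortedLE
    intro x
    simpa only [Finset.mem_sort] using fun hx => Finset.erase_subset_erase a hθη hx
  have hstrict : (a :: (η.erase a).sort (· ≤ ·)).Pairwise (· < ·) :=
    hη.sort_eq_cons ▸ (Finset.sortedLT_sort η).pairwise
  have hlast := hθ.getLastD_sort_erase.trans hη.getLastD_sort_erase.symm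
  have hstep : ∀ x p, IsGreatest {q | q ∈ a :: (θ.erase a).sort (· ≤ ·) ∧ q ≤ x} p →
      (f ∘ leftNode θ) x = f p := by
    intro x p hp
    simp only [← hθ.sort_eq_cons, Finset.mem_sort] at hp
    exact congrArg f (leftNode_eq_of_isGreatest hp)
  have key := leftRiemannSum_eq_of_sublist f (f ∘ leftNode θ) P hsub le_rfl hstrict hlast
    (congrArg f (leftNode_of_mem hθ.1)) fun x _ => hstep x
  rw [sigmaSum_eq_leftRiemannSum, sigmaSum_eq_leftRiemannSum, hθ.sort_eq_cons, hη.sort_eq_cons,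
    key, sub_self, mul_zero, zero_add]

variable {f P : ℝ → H →L[ℂ] H}

lemma norm_sigmaSum_apply_le (hP : IsIncreasingProjectionOn P (Set.Icc a b))
    (hf : IsAdaptedOn f P (Set.Icc a b)) (hfC : ∀ x ∈ Set.Icc a b, ‖f x‖ ≤ C)
    (hθ : IsPartitionOf a b θ) (ξ : H) : ‖sigmaSum f P θ ξ‖ ≤ C * ‖ξ‖ := by
  have ha : a ∈ Set.Icc a b := hθ.2.2 a hθ.1
  have hC : 0 ≤ C := (norm_nonneg _).trans (hfC a ha)
  have hmem : ∀ x ∈ a :: (θ.erase a).sort (· ≤ ·), x ∈ Set.Icc a b := by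
    simpa only [← hθ.sort_eq_cons, Finset.mem_sort] using hθ.2.2
  have hsorted : (a :: (θ.erase a).sort (· ≤ ·)).Pairwise (· ≤ ·) :=
    hθ.sort_eq_cons ▸ Finset.pairwise_sort θ (· ≤ ·)
  calc ‖sigmaSum f P θ ξ‖ = ‖leftRiemannSum f P (a :: (θ.erase a).sort (· ≤ ·)) ξ‖ := by
        rw [sigmaSum_eq_leftRiemannSum, hθ.sort_eq_cons]
    _ ≤ C * ‖ξ - P a ξ‖ := hP.norm_leftRiemannSum_apply_le hf hfC ξ hmem hsorted
    _ ≤ C * ‖ξ‖ := mul_le_mul_of_nonneg_left (hP.norm_sub_apply_le ha ξ) hC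

theorem sigma_cauchy_estimate_general {δ : ℝ} {θ₁ θ₂ : Finset ℝ}
    (hP : IsIncreasingProjectionOn P (Set.Icc a b))
    (hf : IsAdaptedOn f P (Set.Icc a b))
    (hosc : ∀ u ∈ Set.Icc a b, ∀ v ∈ Set.Icc a b, |u - v| < δ → ‖f u - f v‖ ≤ C)
    (hθ₁ : IsPartitionOf a b θ₁) (hθ₂ : IsPartitionOf a b θ₂)
    (hmesh₁ : meshOf θ₁ < δ) (hmesh₂ : meshOf θ₂ < δ) (ξ : H) :
    ‖sigmaSum f P θ₁ ξ - sigmaSum f P θ₂ ξ‖ ≤ C * ‖ξ‖ := by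
  have hη : IsPartitionOf a b (θ₁ ∪ θ₂) := hθ₁.union hθ₂
  have hdiff : sigmaSum (f ∘ leftNode θ₁ - f ∘ leftNode θ₂) P (θ₁ ∪ θ₂) =
      sigmaSum f P θ₁ - sigmaSum f P θ₂ := by
    rw [sigmaSum_sub, sigmaSum_comp_leftNode_of_subset f P hθ₁ hη Finset.subset_union_left,
      sigmaSum_comp_leftNode_of_subset f P hθ₂ hη Finset.subset_union_right]
  have hstep : ∀ x ∈ Set.Icc a b, ‖(f ∘ leftNode θ₁ - f ∘ leftNode θ₂) x‖ ≤ C := fun x hx =>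
    hosc _ (hθ₁.leftNode_mem_Icc hx) _ (hθ₂.leftNode_mem_Icc hx)
      ((hθ₁.abs_leftNode_sub_leftNode_le hθ₂ hx).trans_lt (max_lt hmesh₁ hmesh₂))
  rw [← sub_apply, ← hdiff]
  exact norm_sigmaSum_apply_le hP ((hf.comp_leftNode hθ₁).sub (hf.comp_leftNode hθ₂)) hstep hη ξ

end SigmaSum

/-- If ‖f(u) − f(v)‖ ≤ ε/(2‖ξ‖) whenever u, v ∈ [a,b] with |u − v| ≤ δ,
then for any two partitions θ₁, θ₂ of [a,b] of mesh < δ one has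
‖σ_{θ₁}ξ − σ_{θ₂}ξ‖ ≤ ε. -/
theorem sigma_cauchy_estimate
    {H : Type*} [NormedAddCommGroup H] [InnerProductSpace ℂ H] [CompleteSpace H]
    (a b : ℝ) (ha : 0 ≤ a) (hab : a < b)
    (P : ℝ → H →L[ℂ] H)
    (hP_proj : ∀ s, 0 ≤ s → IsSelfAdjoint (P s) ∧ P s ∘L P s = P s)
    (hP_mono : ∀ s u, 0 ≤ s → s ≤ u → P s ∘L P u = P s ∧ P u ∘L P s = P s)
    (f : ℝ → H →L[ℂ] H)
    (hf_adapted : ∀ s u, 0 ≤ s → s ≤ u → f s ∘L P u = P u ∘L f s)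
    (ξ : H) (ε δ : ℝ) (hε : 0 < ε) (hδ : 0 < δ)
    (hf_osc : ∀ u v, u ∈ Set.Icc a b → v ∈ Set.Icc a b → |u - v| ≤ δ →
      ‖f u - f v‖ ≤ ε / (2 * ‖ξ‖))
    (θ₁ θ₂ : Finset ℝ)
    (hθ₁ : IsPartitionOf a b θ₁) (hθ₂ : IsPartitionOf a b θ₂)
    (hmesh₁ : meshOf θ₁ < δ) (hmesh₂ : meshOf θ₂ < δ) :
    ‖sigmaSum f P θ₁ ξ - sigmaSum f P θ₂ ξ‖ ≤ ε := by
  have hP : IsIncreasingProjectionOn P (Set.Icc a b) :=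
    ⟨fun t ht => (hP_proj t (ha.trans ht.1)).1.isSymmetric,
      fun s hs t _ hst => (hP_mono s t (ha.trans hs.1) hst).1⟩
  have hf : IsAdaptedOn f P (Set.Icc a b) := fun s hs t _ hst =>
    hf_adapted s t (ha.trans hs.1) hst
  calc ‖sigmaSum f P θ₁ ξ - sigmaSum f P θ₂ ξ‖ ≤ ε / (2 * ‖ξ‖) * ‖ξ‖ :=
        sigma_cauchy_estimate_general hP hf (fun u hu v hv huv => hf_osc u v hu hv huv.le)
          hθ₁ hθ₂ hmesh₁ hmesh₂ ξ
    _ = ε / 2 * (‖ξ‖ / ‖ξ‖) := by ring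
    _ ≤ ε := by nlinarith [div_self_le_one ‖ξ‖]
end
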